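/- (Minimax lower bound.) Let p ≥ 10 and 1 ≤ s be integers with p > 3(s+1), let n ≥ 1, let a_ℓ < a_u be reals, let δ ∈ [0,1), and let T > 0. Let D ∈ ℝ^{p×p} be an orthogonal matrix whose first column is d₁ = p^{−1/2}(1,…,1)^⊤, with D̄ ∈ ℝ^{p×(p−1)} denoting D with its first column removed, and for 1 ≤ k ≤ s let λ_k = λ_k(D̄) > 0 be the k-sparse localization quantity of D̄. Let Ã ∈ ℝ^{n×p} have all entries in [a_ℓ/√n, a_u/√n], assume ‖ÃDu‖₂² ≤ (1+δ)‖u‖₂² for every u ∈ ℝ^p with ‖u‖₀ ≤ 2s, and set A = (Ã + ((a_u − 2a_ℓ)/√n)·𝟙_{n×p}) / (2√n(a_u − a_ℓ)). Then the minimax risk satisfies inf_{f̂} sup_{f* ∈ F_{p,s,D}} E‖f̂(y) − f*‖₂² ≥ max_{1 ≤ k ≤ s} min( k / (32 p² λ_k²), (a_u − a_ℓ)² k / (512 T) · ln( (p − k − 1)/(k/2) ) ). -/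

import Mathlib

/-!
The worst-case risk is bounded below by the average risk over a product family of signals, which
splits into `k` independent multiple-testing problems.

Put `m = ⌊q / k⌋ ≥ 3` and choose `k` disjoint blocks of `m` columns of `D̄`. An index vector
`x : Fin k → Fin m` selects one column per block, with indicator `v_x ∈ {0,1}^q` of weight `k`, and
the corresponding signal is `f_x = 1/p + c D̄ v_x`. It is nonnegative as soon as `c λ_k ≤ 1/p`, it
sums to one because `D̄` is orthogonal to constants, and `D̄ᵀ f_x = c v_x` is `k`-sparse. By
orthogonality of `D`, the loss `‖f̂ - f_x‖²` dominates the sum over blocks of the loss in estimating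
`c` times the indicator of the selected column (`block_loss_le`).

In one block, with the selections in the other blocks fixed, there are `m` hypotheses with
probability weights `p_a`. The posterior mean minimizes the Bayes risk, and with the
arithmetic-harmonic mean inequality this gives the bound `c² (1 - E / m)`, where `E` bounds all
`∑ p_a² / p_i` (`block_pointwise`, `block_risk`). Averaging over blocks and selections yields
`k c² (1 - E / m)` (`product_risk`). This chi-square argument takes the place of a packing set
and the Fano inequality.

For Poisson vectors `∑ P_r² / P_t = exp (∑ (r_i - t_i)² / t_i)` (`tsum_poissonWeight_sq_div`).
Two selections differing in one block have coefficient vectors that differ in at most two entries,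
so the restricted isometry bound, together with `A f ≥ 1 / (2 n)` on the simplex, bounds the exponent
by `2 c² T / (a_u - a_ℓ)²` (`chi_exponent_le`). With
`c² = min (1 / (p² λ_k²)) ((a_u - a_ℓ)² L / (16 T))`, `L = ln ((p - k - 1) / (k / 2))`, the exponent
is at most `L / 8`, and `exp L ≤ 2 m` forces `E ≤ m / 2`. The risk is then at least `k c² / 2`, which
exceeds the claimed `k c² / 32`.
-/


open scoped Classical ENNReal
open MeasureTheory

/-- The `k`-sparse localization quantity of a matrix `X` with `q` columns:
`λ_k(X) = max{ ‖Xv‖_∞ : v ∈ {−1,0,1}^q, ‖v‖₀ = k }`.  (The norm on `Fin m → ℝ` is the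
sup norm.) -/
noncomputable def sparseLoc {m q : ℕ} (X : Matrix (Fin m) (Fin q) ℝ) (k : ℕ) : ℝ :=
  sSup { r : ℝ | ∃ v : Fin q → ℝ, (∀ i, v i = -1 ∨ v i = 0 ∨ v i = 1) ∧
    (Finset.univ.filter fun i => v i ≠ 0).card = k ∧ r = ‖X.mulVec v‖ }


/-! ### Bayes risk of product families -/

/-- Pointwise Bayes bound: minimizing the weighted quadratic loss over `g` gives
`c² (S - ∑ p_a² / S)` with `S = ∑ p_a`, and `1 / S` is at most `m⁻² ∑ 1 / p_i`. -/
lemma block_pointwise {m : ℕ} (hm : 0 < m) (p g : Fin m → ℝ) (hp : ∀ a, 0 < p a) (c : ℝ) :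
    c ^ 2 * ∑ a, p a ≤ ∑ a, p a * ∑ a', (g a' - if a = a' then c else 0) ^ 2
      + c ^ 2 / m ^ 2 * ∑ a, ∑ i, p a ^ 2 / p i := by
  have : Nonempty (Fin m) := ⟨⟨0, hm⟩⟩
  have hm' : (0 : ℝ) < m := by exact_mod_cast hm
  set S := ∑ a, p a with hS
  have hS0 : 0 < S := Finset.sum_pos (fun a _ => hp a) Finset.univ_nonempty
  have hAH : 1 / S ≤ (∑ i, 1 / p i) / m ^ 2 := by
    have h := Finset.sq_sum_div_le_sum_sq_div (Finset.univ : Finset (Fin m)) (fun _ => (1 : ℝ))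
      (g := p) (fun i _ => hp i)
    simp only [Finset.sum_const, Finset.card_univ, Fintype.card_fin, nsmul_eq_mul, mul_one,
      one_pow] at h
    rw [div_le_div_iff₀ hS0 (by positivity)]
    rw [div_le_iff₀ hS0] at h
    linarith
  have hexp : ∀ a, ∑ a', (g a' - if a = a' then c else 0) ^ 2
      = ∑ a', g a' ^ 2 - 2 * c * g a + c ^ 2 := by
    intro a
    have : ∀ a', (g a' - if a = a' then c else 0) ^ 2
        = g a' ^ 2 + (if a = a' then c ^ 2 - 2 * c * g a' else 0) := by
      intro a'
      split_ifs <;> ring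
    simp only [this, Finset.sum_add_distrib, Finset.sum_ite_eq, Finset.mem_univ, if_true]
    ring
  have h1 : ∑ a, p a * ∑ a', (g a' - if a = a' then c else 0) ^ 2
      = ∑ a, (S * g a ^ 2 - 2 * c * (p a * g a)) + c ^ 2 * S := by
    simp only [hexp]
    rw [Finset.sum_sub_distrib, ← Finset.mul_sum, ← Finset.mul_sum, hS, Finset.mul_sum _ _ (c ^ 2),
      Finset.sum_mul, Finset.mul_sum _ _ (2 * c), ← Finset.sum_sub_distrib,
      ← Finset.sum_add_distrib]
    exact Finset.sum_congr rfl fun a _ => by ring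
  have h2 : ∑ a, (-(c ^ 2 * (p a ^ 2 * (1 / S)))) ≤ ∑ a, (S * g a ^ 2 - 2 * c * (p a * g a)) := by
    refine Finset.sum_le_sum fun a _ => ?_
    have : 0 ≤ (S * g a - c * p a) ^ 2 * (1 / S) := by positivity
    have e : (S * g a - c * p a) ^ 2 * (1 / S)
        = S * g a ^ 2 - 2 * c * (p a * g a) + c ^ 2 * (p a ^ 2 * (1 / S)) := by
      field_simp
      ring
    linarith
  have h3 : ∑ a, c ^ 2 * (p a ^ 2 * (1 / S)) ≤ c ^ 2 / m ^ 2 * ∑ a, ∑ i, p a ^ 2 / p i := by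
    rw [Finset.mul_sum]
    refine Finset.sum_le_sum fun a _ => ?_
    have : c ^ 2 / m ^ 2 * ∑ i, p a ^ 2 / p i = c ^ 2 * (p a ^ 2 * ((∑ i, 1 / p i) / m ^ 2)) := by
      have : ∑ i, p a ^ 2 / p i = p a ^ 2 * ∑ i, 1 / p i := by
        rw [Finset.mul_sum]
        exact Finset.sum_congr rfl fun i _ => by ring
      rw [this]
      ring
    rw [this]
    gcongr
  rw [Finset.sum_neg_distrib] at h2
  rw [h1]
  linarith

/-- Total risk of estimating `c` times the indicator of the true index among `m` hypotheses whose
probability mass functions `p a` satisfy `∑ p_a² / p_i ≤ E`. -/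
lemma block_risk {Y : Type*} {m : ℕ} (hm : 0 < m) (p : Fin m → Y → ℝ) (hp : ∀ a y, 0 < p a y)
    (hp1 : ∀ a, ∑' y, ENNReal.ofReal (p a y) = 1) (E : ℝ) (hE : 0 ≤ E)
    (hchi : ∀ a i, ∑' y, ENNReal.ofReal (p a y ^ 2 / p i y) ≤ ENNReal.ofReal E)
    (c : ℝ) (g : Y → Fin m → ℝ) :
    ENNReal.ofReal (c ^ 2 * (m - E)) ≤
      ∑ a, ∑' y, ENNReal.ofReal (p a y * ∑ a', (g y a' - if a = a' then c else 0) ^ 2) := by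
  have hm' : (0 : ℝ) < m := by exact_mod_cast hm
  have key : ∑' y, ENNReal.ofReal (c ^ 2 * ∑ a, p a y) ≤
      (∑' y, ∑ a, ENNReal.ofReal (p a y * ∑ a', (g y a' - if a = a' then c else 0) ^ 2))
      + ∑' y, ENNReal.ofReal (c ^ 2 / m ^ 2) * ∑ a, ∑ i, ENNReal.ofReal (p a y ^ 2 / p i y) := by
    rw [← ENNReal.tsum_add]
    refine ENNReal.tsum_le_tsum fun y => ?_
    have h0 : ∀ a i, 0 ≤ p a y ^ 2 / p i y := fun a i => by
      have := hp i y
      positivity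
    have e2 : ∑ a, ∑ i, ENNReal.ofReal (p a y ^ 2 / p i y)
        = ENNReal.ofReal (∑ a, ∑ i, p a y ^ 2 / p i y) := by
      rw [ENNReal.ofReal_sum_of_nonneg fun a _ => Finset.sum_nonneg fun i _ => h0 a i]
      exact Finset.sum_congr rfl fun a _ => (ENNReal.ofReal_sum_of_nonneg fun i _ => h0 a i).symm
    have h4 : ∀ a, 0 ≤ p a y * ∑ a', (g y a' - if a = a' then c else 0) ^ 2 := fun a => by
      have := (hp a y).le
      positivity
    rw [e2, ← ENNReal.ofReal_mul (by positivity), ← ENNReal.ofReal_sum_of_nonneg fun a _ => h4 a,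
      ← ENNReal.ofReal_add (Finset.sum_nonneg fun a _ => h4 a)]
    · exact ENNReal.ofReal_le_ofReal (block_pointwise hm (fun a => p a y) (g y)
        (fun a => hp a y) c)
    · exact mul_nonneg (by positivity) (Finset.sum_nonneg fun a _ => Finset.sum_nonneg fun i _ => h0 a i)
  have hL : ∑' y, ENNReal.ofReal (c ^ 2 * ∑ a, p a y) = ENNReal.ofReal (c ^ 2 * m) := by
    simp_rw [ENNReal.ofReal_mul (sq_nonneg c),
      ENNReal.ofReal_sum_of_nonneg (fun a _ => (hp a _).le)]
    rw [ENNReal.tsum_mul_left, Summable.tsum_finsetSum (fun _ _ => ENNReal.summable)]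
    simp [hp1]
  have hR : ∑' y, ENNReal.ofReal (c ^ 2 / m ^ 2) * ∑ a, ∑ i, ENNReal.ofReal (p a y ^ 2 / p i y)
      ≤ ENNReal.ofReal (c ^ 2 * E) := by
    rw [ENNReal.tsum_mul_left, Summable.tsum_finsetSum (fun _ _ => ENNReal.summable)]
    simp_rw [Summable.tsum_finsetSum (fun _ _ => ENNReal.summable)]
    calc _ ≤ ENNReal.ofReal (c ^ 2 / m ^ 2) * ∑ a : Fin m, ∑ i : Fin m, ENNReal.ofReal E := by
          gcongr with a _ i _
          exact hchi a i
      _ = ENNReal.ofReal (c ^ 2 * E) := by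
          simp only [Finset.sum_const, Finset.card_univ, Fintype.card_fin, nsmul_eq_mul]
          rw [← ENNReal.ofReal_natCast m, ← ENNReal.ofReal_mul (by positivity),
            ← ENNReal.ofReal_mul (by positivity), ← ENNReal.ofReal_mul (by positivity)]
          congr 1
          field_simp
  rw [mul_sub, ENNReal.ofReal_sub _ (by positivity), tsub_le_iff_right, ← hL,
    ← Summable.tsum_finsetSum (fun _ _ => ENNReal.summable)]
  exact key.trans (by gcongr)

/-- Resampling coordinate `b` uniformly preserves the uniform distribution on selections. -/
lemma sum_sum_update {k m : ℕ} (b : Fin k) (F : (Fin k → Fin m) → ℝ≥0∞) :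
    ∑ x, ∑ a, F (Function.update x b a) = m * ∑ x, F x := by
  -- an involution swapping the new entry with the old one
  let σ : (Fin k → Fin m) × Fin m → (Fin k → Fin m) × Fin m :=
    fun z => (Function.update z.1 b z.2, z.1 b)
  have hσ : Function.Involutive σ := by
    rintro ⟨x, a⟩
    simp [σ]
  have h := hσ.bijective.sum_comp (fun z => F z.1)
  rw [← Fintype.sum_prod_type' (f := fun x a => F (Function.update x b a))]
  refine h.trans ?_
  rw [Fintype.sum_prod_type]
  simp [Finset.mul_sum]

/-- Lower bound on the maximal risk over a product of `k` blocks with `m` hypotheses each. The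
chi-square condition is only needed for selections differing in a single block. -/
lemma product_risk {Y : Type*} {k m : ℕ} (hm : 0 < m) (w : (Fin k → Fin m) → Y → ℝ)
    (hw : ∀ x y, 0 < w x y) (hw1 : ∀ x, ∑' y, ENNReal.ofReal (w x y) = 1) (E : ℝ) (hE : 0 ≤ E)
    (hchi : ∀ x b a, ∑' y, ENNReal.ofReal (w (Function.update x b a) y ^ 2 / w x y)
      ≤ ENNReal.ofReal E)
    (c : ℝ) (g : Y → Fin k → Fin m → ℝ) (R : ℝ≥0∞)
    (hR : ∀ x, ∑' y, ENNReal.ofReal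
      (w x y * ∑ b, ∑ a, (g y b a - if x b = a then c else 0) ^ 2) ≤ R) :
    ENNReal.ofReal (k * (c ^ 2 * (1 - E / m))) ≤ R := by
  have hm' : (0 : ℝ) < m := by exact_mod_cast hm
  set r : (Fin k → Fin m) → Fin k → ℝ≥0∞ := fun x b =>
    ∑' y, ENNReal.ofReal (w x y * ∑ a, (g y b a - if x b = a then c else 0) ^ 2) with hr
  set N : ℝ≥0∞ := ((Finset.univ : Finset (Fin k → Fin m)).card : ℝ≥0∞) with hN
  have : Nonempty (Fin m) := ⟨⟨0, hm⟩⟩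
  have hN0 : N ≠ 0 := by
    rw [hN, Nat.cast_ne_zero]
    exact (Finset.card_pos.2 Finset.univ_nonempty).ne'
  have hNt : N ≠ ⊤ := ENNReal.natCast_ne_top _
  have h1 : ∀ x, ∑ b, r x b ≤ R := by
    intro x
    refine le_trans (le_of_eq ?_) (hR x)
    rw [← Summable.tsum_finsetSum (fun _ _ => ENNReal.summable)]
    refine tsum_congr fun y => ?_
    rw [Finset.mul_sum, ENNReal.ofReal_sum_of_nonneg]
    intro b _
    have := (hw x y).le
    positivity
  have h2 : ∑ b, ∑ x, r x b ≤ N * R := by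
    rw [Finset.sum_comm]
    refine (Finset.sum_le_sum fun x _ => h1 x).trans ?_
    rw [Finset.sum_const, nsmul_eq_mul]
  have h3 : ∀ b, N * ENNReal.ofReal (c ^ 2 * (1 - E / m)) ≤ ∑ x, r x b := by
    intro b
    have h4 : ∀ x, ENNReal.ofReal (c ^ 2 * (m - E)) ≤ ∑ a, r (Function.update x b a) b := by
      intro x
      have := block_risk hm (fun a => w (Function.update x b a)) (fun a y => hw _ y)
        (fun a => hw1 _) E hE
        (fun a i => by simpa using hchi (Function.update x b i) b a) c (fun y => g y b)
      simpa [hr] using this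
    have h5 := Finset.sum_le_sum fun x (_ : x ∈ Finset.univ) => h4 x
    rw [sum_sum_update b (fun x => r x b), Finset.sum_const, nsmul_eq_mul] at h5
    have h6 : ENNReal.ofReal (c ^ 2 * (m - E)) = m * ENNReal.ofReal (c ^ 2 * (1 - E / m)) := by
      rw [← ENNReal.ofReal_natCast m, ← ENNReal.ofReal_mul hm'.le]
      congr 1
      field_simp
    rw [h6, mul_left_comm] at h5
    exact (ENNReal.mul_le_mul_iff_right (by exact_mod_cast hm.ne')
      (ENNReal.natCast_ne_top m)).1 h5
  have h7 := (Finset.sum_le_sum fun b (_ : b ∈ Finset.univ) => h3 b).trans h2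
  rw [Finset.sum_const, nsmul_eq_mul, Finset.card_univ, Fintype.card_fin, mul_left_comm] at h7
  have h8 := (ENNReal.mul_le_mul_iff_right hN0 hNt).1 h7
  rwa [← ENNReal.ofReal_natCast k, ← ENNReal.ofReal_mul (by positivity)] at h8

/-! ### Chi-square quantities of Poisson vectors -/

/-- Probability mass function of a vector of independent Poisson variables with rates `r i`.
It has this meaning only for nonnegative rates. -/
noncomputable def poissonWeight {n : ℕ} (r : Fin n → ℝ) (y : Fin n → ℕ) : ℝ :=
  ∏ i, (Real.exp (-r i) * r i ^ y i / (y i).factorial)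

lemma poissonWeight_pos {n : ℕ} {r : Fin n → ℝ} (hr : ∀ i, 0 < r i) (y : Fin n → ℕ) :
    0 < poissonWeight r y :=
  Finset.prod_pos fun i _ => by
    have := hr i
    positivity

lemma pi_poisson_singleton {n : ℕ} {r : Fin n → ℝ} (hr : ∀ i, 0 < r i) (y : Fin n → ℕ) :
    (Measure.pi fun i => ProbabilityTheory.poissonMeasure (r i).toNNReal) {y}
      = ENNReal.ofReal (poissonWeight r y) := by
  rw [Measure.pi_singleton, poissonWeight, ENNReal.ofReal_prod_of_nonneg]
  · refine Finset.prod_congr rfl fun i _ => ?_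
    rw [ProbabilityTheory.poissonMeasure_singleton, Real.coe_toNNReal _ (hr i).le]
  · intro i _
    have := hr i
    positivity

lemma lintegral_pi_poisson {n : ℕ} {r : Fin n → ℝ} (hr : ∀ i, 0 < r i) (f : (Fin n → ℕ) → ℝ) :
    ∫⁻ y, ENNReal.ofReal (f y)
        ∂(Measure.pi fun i => ProbabilityTheory.poissonMeasure (r i).toNNReal)
      = ∑' y, ENNReal.ofReal (poissonWeight r y * f y) := by
  rw [lintegral_countable']
  refine tsum_congr fun y => ?_
  rw [pi_poisson_singleton hr, mul_comm, ENNReal.ofReal_mul (poissonWeight_pos hr y).le]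

lemma tsum_poissonWeight {n : ℕ} {r : Fin n → ℝ} (hr : ∀ i, 0 < r i) :
    ∑' y, ENNReal.ofReal (poissonWeight r y) = 1 := by
  have := lintegral_pi_poisson hr (fun _ => 1)
  simpa using this.symm

/-- Chi-square formula for Poisson vectors: `P_r² / P_t` is an exponential constant times the
mass function with rates `r_i² / t_i`, which sums to one. -/
lemma tsum_poissonWeight_sq_div {n : ℕ} {r t : Fin n → ℝ} (hr : ∀ i, 0 < r i)
    (ht : ∀ i, 0 < t i) :
    ∑' y, ENNReal.ofReal (poissonWeight r y ^ 2 / poissonWeight t y)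
      = ENNReal.ofReal (Real.exp (∑ i, (r i - t i) ^ 2 / t i)) := by
  have h : ∀ y, poissonWeight r y ^ 2 / poissonWeight t y
      = Real.exp (∑ i, (r i - t i) ^ 2 / t i) * poissonWeight (fun i => r i ^ 2 / t i) y := by
    intro y
    rw [poissonWeight, poissonWeight, poissonWeight, ← Finset.prod_pow, ← Finset.prod_div_distrib,
      Real.exp_sum, ← Finset.prod_mul_distrib]
    refine Finset.prod_congr rfl fun i _ => ?_
    have h1 := (ht i).ne'
    have e1 : Real.exp ((r i - t i) ^ 2 / t i) * Real.exp (-(r i ^ 2 / t i))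
        = Real.exp (-r i) ^ 2 / Real.exp (-t i) := by
      rw [← Real.exp_nat_mul, ← Real.exp_sub, ← Real.exp_add]
      congr 1
      push_cast
      field_simp
      ring
    calc _ = (Real.exp (-r i) ^ 2 / Real.exp (-t i)) * ((r i ^ 2 / t i) ^ y i)
          / (y i).factorial := by
            rw [div_pow, div_pow, ← pow_mul, mul_comm 2, pow_mul]
            field_simp
      _ = _ := by rw [← e1]; ring
  simp_rw [h, ENNReal.ofReal_mul (Real.exp_pos _).le]
  rw [ENNReal.tsum_mul_left, tsum_poissonWeight, mul_one]
  intro i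
  have := hr i
  have := ht i
  positivity

/-! ### Calibration of the family -/

lemma norm_mulVec_le_sparseLoc {m q : ℕ} (X : Matrix (Fin m) (Fin q) ℝ) (k : ℕ) (v : Fin q → ℝ)
    (hv : ∀ i, v i = -1 ∨ v i = 0 ∨ v i = 1)
    (hk : (Finset.univ.filter fun i => v i ≠ 0).card = k) :
    ‖X.mulVec v‖ ≤ sparseLoc X k := by
  refine le_csSup ?_ ⟨v, hv, hk, rfl⟩
  have hfin : (Set.univ.pi fun _ : Fin q => ({-1, 0, 1} : Set ℝ)).Finite :=
    Set.Finite.pi fun _ => by simp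
  refine ((hfin.image fun v => ‖X.mulVec v‖).subset ?_).bddAbove
  rintro r ⟨w, hw, -, rfl⟩
  exact ⟨w, fun i _ => by simpa using hw i, rfl⟩

/-- Calibration of the block size `m = ⌊q / k⌋`: the argument `Q` of the logarithm satisfies
`4 ≤ Q ≤ 2 m`, and `(2 m)^(1/8) ≤ m / 2` once `m ≥ 3`. -/
lemma log_rate_bounds {q k : ℕ} (hk : 1 ≤ k) (hq : 3 * k ≤ q) :
    0 < Real.log ((((q : ℝ) + 1) - k - 1) / ((k : ℝ) / 2)) ∧
    Real.exp (Real.log ((((q : ℝ) + 1) - k - 1) / ((k : ℝ) / 2)) / 8) ≤ ((q / k : ℕ) : ℝ) / 2 := by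
  have hk0 : (0 : ℝ) < k := by exact_mod_cast hk
  have hq' : 3 * (k : ℝ) ≤ q := by exact_mod_cast hq
  have hm3 : 3 ≤ q / k := (Nat.le_div_iff_mul_le hk).2 hq
  have hm3' : (3 : ℝ) ≤ ((q / k : ℕ) : ℝ) := by exact_mod_cast hm3
  have hqm : (q : ℝ) ≤ k * (((q / k : ℕ) : ℝ) + 1) := by
    exact_mod_cast (Nat.lt_mul_div_succ q hk).le
  generalize ((q / k : ℕ) : ℝ) = m at *
  set Q := (((q : ℝ) + 1) - k - 1) / ((k : ℝ) / 2) with hQ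
  have hQ1 : 4 ≤ Q := by
    rw [hQ, le_div_iff₀ (by positivity)]
    linarith
  have hQ2 : Q ≤ 2 * m := by
    rw [hQ, div_le_iff₀ (by positivity)]
    linarith
  refine ⟨Real.log_pos (by linarith), ?_⟩
  have h8 : Real.exp (Real.log Q / 8) ^ 8 = Q := by
    rw [← Real.exp_nat_mul]
    have : ((8 : ℕ) : ℝ) * (Real.log Q / 8) = Real.log Q := by push_cast; ring
    rw [this, Real.exp_log (by linarith)]
  refine le_of_pow_le_pow_left₀ (n := 8) (by norm_num) (by linarith) ?_
  rw [h8]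
  have h7 : (4 : ℝ) ≤ (m / 2) ^ 7 :=
    le_trans (by norm_num) (pow_le_pow_left₀ (by norm_num : (0 : ℝ) ≤ 3 / 2) (by linarith) 7)
  calc Q ≤ 4 * (m / 2) := by linarith
    _ ≤ (m / 2) ^ 7 * (m / 2) := by gcongr
    _ = (m / 2) ^ 8 := by ring

/-! ### Signals indexed by block selections -/

/-- Indicator in `ℝ^q` of the columns selected by `x`, one in each block; `e (b, a)` is the `a`-th
column of block `b`. -/
noncomputable def blockInd {k m q : ℕ} (e : Fin k × Fin m → Fin q) (x : Fin k → Fin m) :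
    Fin q → ℝ :=
  fun j => if ∃ b, e (b, x b) = j then 1 else 0

lemma blockInd_apply {k m q : ℕ} {e : Fin k × Fin m → Fin q} (he : Function.Injective e)
    (x : Fin k → Fin m) (b : Fin k) (a : Fin m) :
    blockInd e x (e (b, a)) = if x b = a then 1 else 0 := by
  unfold blockInd
  refine if_congr ?_ rfl rfl
  constructor
  · rintro ⟨b', h⟩
    have := he h
    simp only [Prod.mk.injEq] at this
    rw [← this.1]
    exact this.2
  · rintro rfl
    exact ⟨b, rfl⟩

lemma card_blockInd {k m q : ℕ} {e : Fin k × Fin m → Fin q} (he : Function.Injective e)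
    (x : Fin k → Fin m) : (Finset.univ.filter fun j => blockInd e x j ≠ 0).card = k := by
  have : (Finset.univ.filter fun j => blockInd e x j ≠ 0)
      = Finset.univ.image fun b => e (b, x b) := by
    ext j
    simp [blockInd]
  rw [this, Finset.card_image_of_injective, Finset.card_univ, Fintype.card_fin]
  intro b b' h
  simpa using congrArg Prod.fst (he h)

lemma blockInd_update_of_ne {k m q : ℕ} (e : Fin k × Fin m → Fin q)
    (x : Fin k → Fin m) (b : Fin k) (a : Fin m) (j : Fin q) (h1 : j ≠ e (b, a))
    (h2 : j ≠ e (b, x b)) : blockInd e (Function.update x b a) j = blockInd e x j := by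
  unfold blockInd
  refine if_congr (exists_congr fun b' => ?_) rfl rfl
  by_cases hb : b' = b
  · subst hb
    simp [h1.symm, h2.symm]
  · simp [Function.update_of_ne hb]

/-- Coefficients in the basis `D` of the signal selected by `x`: the constant component is
`1 / √(q + 1)`, and the others are `c` on the selected columns. -/
noncomputable def coef {k m q : ℕ} (e : Fin k × Fin m → Fin q) (c : ℝ) (x : Fin k → Fin m) :
    Fin (q + 1) → ℝ :=
  Fin.cons (1 / Real.sqrt (q + 1)) (c • blockInd e x)

/-- Changing the selection in one block alters at most two coefficients, each by at most `|c|`. -/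
lemma coef_sub_update {k m q : ℕ} (e : Fin k × Fin m → Fin q) (c : ℝ)
    (x : Fin k → Fin m) (b : Fin k) (a : Fin m) :
    (Finset.univ.filter fun j =>
      (coef e c (Function.update x b a) - coef e c x) j ≠ 0).card ≤ 2 ∧
    ∑ j, ((coef e c (Function.update x b a) - coef e c x) j) ^ 2 ≤ 2 * c ^ 2 := by
  set d := coef e c (Function.update x b a) - coef e c x with hd
  set S : Finset (Fin (q + 1)) := {(e (b, a)).succ, (e (b, x b)).succ} with hS
  have hS2 : S.card ≤ 2 := Finset.card_le_two
  have hd0 : ∀ j, j ∉ S → d j = 0 := by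
    intro j hj
    refine Fin.cases ?_ (fun j hj => ?_) j hj
    · intro _
      simp [hd, coef]
    · simp only [hS, Finset.mem_insert, Finset.mem_singleton, Fin.succ_inj, not_or] at hj
      simp [hd, coef, blockInd_update_of_ne e x b a j hj.1 hj.2]
  have hd1 : ∀ j, d j ^ 2 ≤ c ^ 2 := by
    intro j
    refine Fin.cases ?_ (fun j => ?_) j
    · simp only [hd, coef, Pi.sub_apply, Fin.cons_zero, sub_self]
      nlinarith [sq_nonneg c]
    · simp only [hd, coef, Pi.sub_apply, Fin.cons_succ, Pi.smul_apply, smul_eq_mul, blockInd]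
      split_ifs <;> nlinarith [sq_nonneg c]
  constructor
  · refine (Finset.card_le_card fun j hj => ?_).trans hS2
    by_contra h
    exact (Finset.mem_filter.1 hj).2 (hd0 j h)
  · rw [← Finset.sum_subset (Finset.subset_univ S) fun j _ hj => by rw [hd0 j hj]; ring]
    calc ∑ j ∈ S, d j ^ 2 ≤ S.card • c ^ 2 := Finset.sum_le_card_nsmul _ _ _ fun j _ => hd1 j
      _ ≤ 2 * c ^ 2 := by
        rw [nsmul_eq_mul]
        have : (S.card : ℝ) ≤ 2 := by exact_mod_cast hS2
        gcongr

lemma transpose_mulVec_mulVec {N : ℕ} {D : Matrix (Fin N) (Fin N) ℝ} (hD : D.transpose * D = 1)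
    (u : Fin N → ℝ) : D.transpose.mulVec (D.mulVec u) = u := by
  rw [Matrix.mulVec_mulVec, hD, Matrix.one_mulVec]

lemma sum_sq_transpose_mulVec {N : ℕ} {D : Matrix (Fin N) (Fin N) ℝ} (hD : D.transpose * D = 1)
    (h : Fin N → ℝ) : ∑ j, (D.transpose.mulVec h j) ^ 2 = ∑ j, h j ^ 2 := by
  have hD' : D * D.transpose = 1 := mul_eq_one_comm.1 hD
  have e : ∀ g : Fin N → ℝ, ∑ j, g j ^ 2 = dotProduct g g := fun g =>
    Finset.sum_congr rfl fun j _ => sq _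
  rw [e, e, Matrix.dotProduct_mulVec, Matrix.vecMul_transpose, Matrix.mulVec_mulVec, hD',
    Matrix.one_mulVec]

/-- The signal `1 / (q + 1) + c D̄ v_x` selected by `x`, where `v_x = blockInd e x`, encoded through
its coefficients in the basis `D`. -/
noncomputable def signal {k m q : ℕ} (D : Matrix (Fin (q + 1)) (Fin (q + 1)) ℝ)
    (e : Fin k × Fin m → Fin q) (c : ℝ) (x : Fin k → Fin m) : Fin (q + 1) → ℝ :=
  D.mulVec (coef e c x)

section
variable {k m q : ℕ} {D : Matrix (Fin (q + 1)) (Fin (q + 1)) ℝ} {e : Fin k × Fin m → Fin q}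

lemma sum_signal (hD : D.transpose * D = 1) (hD1 : ∀ j, D j 0 = 1 / Real.sqrt (q + 1))
    (c : ℝ) (x : Fin k → Fin m) : ∑ i, signal D e c x i = 1 := by
  have h := congrFun (transpose_mulVec_mulVec hD (coef e c x)) 0
  have hs : 0 < Real.sqrt ((q : ℝ) + 1) := Real.sqrt_pos.2 (by positivity)
  simp only [Matrix.mulVec, dotProduct, Matrix.transpose_apply, hD1, ← Finset.mul_sum] at h
  simp only [coef, Fin.cons_zero] at h
  have := mul_left_cancel₀ (one_div_pos.2 hs).ne' (h.trans (mul_one _).symm)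
  simpa [signal, Matrix.mulVec, dotProduct, coef] using this

lemma signal_apply (hD1 : ∀ j, D j 0 = 1 / Real.sqrt (q + 1)) (c : ℝ) (x : Fin k → Fin m)
    (i : Fin (q + 1)) :
    signal D e c x i = 1 / ((q : ℝ) + 1)
      + c * (Matrix.of fun i (j : Fin q) => D i j.succ).mulVec (blockInd e x) i := by
  simp only [signal, coef, Matrix.mulVec, dotProduct, Fin.sum_univ_succ, Fin.cons_zero,
    Fin.cons_succ, Matrix.of_apply, hD1, Pi.smul_apply, smul_eq_mul, Finset.mul_sum]
  congr 1
  · rw [div_mul_div_comm, Real.mul_self_sqrt (by positivity), one_mul]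
  · exact Finset.sum_congr rfl fun j _ => by ring

lemma signal_nonneg (hD1 : ∀ j, D j 0 = 1 / Real.sqrt (q + 1)) (he : Function.Injective e)
    {c : ℝ} (hc : 0 ≤ c)
    (hcl : c * sparseLoc (Matrix.of fun i (j : Fin q) => D i j.succ) k ≤ 1 / ((q : ℝ) + 1))
    (x : Fin k → Fin m) (i : Fin (q + 1)) : 0 ≤ signal D e c x i := by
  rw [signal_apply hD1]
  set Db : Matrix (Fin (q + 1)) (Fin q) ℝ := Matrix.of fun i (j : Fin q) => D i j.succ
  have h1 := norm_mulVec_le_sparseLoc Db k (blockInd e x)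
    (fun j => by unfold blockInd; split_ifs <;> simp) (card_blockInd he x)
  have h2 := (norm_le_pi_norm (Db.mulVec (blockInd e x)) i).trans h1
  rw [Real.norm_eq_abs] at h2
  have h3 := neg_le_of_abs_le h2
  nlinarith

lemma card_transpose_signal (hD : D.transpose * D = 1) (he : Function.Injective e)
    (c : ℝ) (x : Fin k → Fin m) :
    (Finset.univ.filter fun j => (Matrix.of fun i (j : Fin q) => D i j.succ).transpose.mulVec
      (signal D e c x) j ≠ 0).card ≤ k := by
  have h : ∀ j, (Matrix.of fun i (j : Fin q) => D i j.succ).transpose.mulVec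
      (signal D e c x) j = c * blockInd e x j := by
    intro j
    have := congrFun (transpose_mulVec_mulVec hD (coef e c x)) j.succ
    simpa [coef, Matrix.mulVec, dotProduct, signal] using this
  simp only [h]
  refine le_of_le_of_eq (Finset.card_le_card fun j hj => ?_) (card_blockInd he x)
  simp only [Finset.mem_filter, Finset.mem_univ, true_and] at hj ⊢
  exact right_ne_zero_of_mul hj

/-- By Parseval, the squared loss dominates the sum over blocks of the losses for the selected
columns. -/
lemma block_loss_le (hD : D.transpose * D = 1) (he : Function.Injective e)
    (c : ℝ) (x : Fin k → Fin m) (h : Fin (q + 1) → ℝ) :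
    ∑ b, ∑ a, (D.transpose.mulVec h (e (b, a)).succ - if x b = a then c else 0) ^ 2
      ≤ ∑ j, (h j - signal D e c x j) ^ 2 := by
  have h1 := sum_sq_transpose_mulVec hD (h - signal D e c x)
  rw [Matrix.mulVec_sub, signal, transpose_mulVec_mulVec hD] at h1
  simp only [Pi.sub_apply] at h1
  rw [signal, ← h1, Fin.sum_univ_succ]
  refine le_add_of_nonneg_of_le (sq_nonneg _) ?_
  have h2 : ∀ b a, (D.transpose.mulVec h (e (b, a)).succ - if x b = a then c else 0) ^ 2
      = (fun j : Fin q => (D.transpose.mulVec h j.succ - coef e c x j.succ) ^ 2) (e (b, a)) := by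
    intro b a
    simp [coef, blockInd_apply he]
  simp only [h2]
  rw [← Fintype.sum_prod_type' (f := fun b a =>
    (D.transpose.mulVec h (e (b, a)).succ - coef e c x (e (b, a)).succ) ^ 2)]
  rw [← Finset.sum_image (s := Finset.univ) (g := e)
    (f := fun j : Fin q => (D.transpose.mulVec h j.succ - coef e c x j.succ) ^ 2)
    (fun _ _ _ _ h => he h)]
  exact Finset.sum_le_sum_of_subset_of_nonneg (Finset.subset_univ _) fun _ _ _ => sq_nonneg _

end

/-! ### The sensing matrix -/

section
variable {n N : ℕ} {al au : ℝ} {At A : Matrix (Fin n) (Fin N) ℝ}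

/-- The entries of `A` are at least `1 / (2 n)`, hence so are the entries of `A f` for `f` in the
simplex. -/
lemma sensing_lower (hn : 1 ≤ n) (hau : al < au)
    (hAt : ∀ i j, At i j ∈ Set.Icc (al / Real.sqrt n) (au / Real.sqrt n))
    (hA : A = Matrix.of fun i j =>
      (At i j + (au - 2 * al) / Real.sqrt n) / (2 * Real.sqrt n * (au - al)))
    {f : Fin N → ℝ} (hf : ∀ i, 0 ≤ f i) (hf1 : ∑ i, f i = 1) (i : Fin n) :
    1 / (2 * (n : ℝ)) ≤ A.mulVec f i := by
  have hn0 : (0 : ℝ) < n := by exact_mod_cast hn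
  have hs : 0 < Real.sqrt n := Real.sqrt_pos.2 hn0
  have hd : 0 < au - al := sub_pos.2 hau
  have hAij : ∀ j, 1 / (2 * (n : ℝ)) ≤ A i j := by
    intro j
    have h1 := (hAt i j).1
    rw [hA, Matrix.of_apply]
    calc 1 / (2 * (n : ℝ))
        = (al / Real.sqrt n + (au - 2 * al) / Real.sqrt n) / (2 * Real.sqrt n * (au - al)) := by
          rw [← add_div, div_div, div_eq_div_iff (by positivity) (by positivity)]
          nlinarith [Real.mul_self_sqrt hn0.le]
      _ ≤ _ := by gcongr
  calc 1 / (2 * (n : ℝ)) = ∑ j, 1 / (2 * (n : ℝ)) * f j := by rw [← Finset.mul_sum, hf1, mul_one]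
    _ ≤ ∑ j, A i j * f j :=
      Finset.sum_le_sum fun j _ => mul_le_mul_of_nonneg_right (hAij j) (hf j)

/-- The constant offset in `A` is invisible on differences of signals with equal total mass. -/
lemma sensing_sub
    (hA : A = Matrix.of fun i j =>
      (At i j + (au - 2 * al) / Real.sqrt n) / (2 * Real.sqrt n * (au - al)))
    {f g : Fin N → ℝ} (hfg : ∑ i, f i = ∑ i, g i) (i : Fin n) :
    A.mulVec f i - A.mulVec g i = At.mulVec (f - g) i / (2 * Real.sqrt n * (au - al)) := by
  have h0 : ∑ j, (f j - g j) = 0 := by rw [Finset.sum_sub_distrib, hfg, sub_self]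
  rw [← Pi.sub_apply, ← Matrix.mulVec_sub]
  simp only [Matrix.mulVec, dotProduct, hA, Matrix.of_apply, Pi.sub_apply, div_mul_eq_mul_div]
  rw [← Finset.sum_div]
  congr 1
  simp only [add_mul, Finset.sum_add_distrib]
  rw [← Finset.mul_sum, h0, mul_zero, add_zero]

end

/-- Exponent of the chi-square quantity for two signals whose selections differ in one block. -/
lemma chi_exponent_le {n q s k m : ℕ} (hn : 1 ≤ n) (hs : 1 ≤ s) {al au : ℝ} (hau : al < au)
    {δ : ℝ} (hδ1 : δ < 1) {T : ℝ} (hT : 0 < T)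
    {D : Matrix (Fin (q + 1)) (Fin (q + 1)) ℝ} (hD : D.transpose * D = 1)
    (hD1 : ∀ j, D j 0 = 1 / Real.sqrt (q + 1)) {e : Fin k × Fin m → Fin q}
    {At A : Matrix (Fin n) (Fin (q + 1)) ℝ}
    (hRIP : ∀ u : Fin (q + 1) → ℝ,
      (Finset.univ.filter fun i => u i ≠ 0).card ≤ 2 * s →
      ∑ i, ((At * D).mulVec u i) ^ 2 ≤ (1 + δ) * ∑ i, (u i) ^ 2)
    (hA : A = Matrix.of fun i j =>
      (At i j + (au - 2 * al) / Real.sqrt n) / (2 * Real.sqrt n * (au - al)))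
    {c : ℝ} (x : Fin k → Fin m) (b : Fin k) (a : Fin m)
    (hlow : ∀ i, 1 / (2 * (n : ℝ)) ≤ A.mulVec (signal D e c x) i) :
    ∑ i, (T * A.mulVec (signal D e c (Function.update x b a)) i
        - T * A.mulVec (signal D e c x) i) ^ 2 / (T * A.mulVec (signal D e c x) i)
      ≤ 2 * c ^ 2 * T / (au - al) ^ 2 := by
  have hn0 : (0 : ℝ) < n := by exact_mod_cast hn
  have hsn : Real.sqrt n ^ 2 = n := Real.sq_sqrt hn0.le
  have hd : 0 < au - al := sub_pos.2 hau
  set x' := Function.update x b a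
  set d := coef e c x' - coef e c x
  obtain ⟨hd2, hdc⟩ := coef_sub_update e c x b a
  have hR : ∑ i, ((At * D).mulVec d i) ^ 2 ≤ 4 * c ^ 2 := by
    refine (hRIP d (hd2.trans (by omega))).trans ?_
    have : 0 ≤ ∑ i, d i ^ 2 := Finset.sum_nonneg fun _ _ => sq_nonneg _
    nlinarith
  have hdiff : ∀ i, A.mulVec (signal D e c x') i - A.mulVec (signal D e c x) i
      = (At * D).mulVec d i / (2 * Real.sqrt n * (au - al)) := by
    intro i
    rw [sensing_sub hA (by rw [sum_signal hD hD1, sum_signal hD hD1]), signal, signal,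
      ← Matrix.mulVec_sub, Matrix.mulVec_mulVec]
  calc _ ≤ ∑ i, T / (2 * (au - al) ^ 2) * ((At * D).mulVec d i) ^ 2 := by
        refine Finset.sum_le_sum fun i _ => ?_
        have hl := hlow i
        have h0 : 0 < A.mulVec (signal D e c x) i := lt_of_lt_of_le (by positivity) hl
        rw [← mul_sub, hdiff i]
        calc _ ≤ (T * ((At * D).mulVec d i / (2 * Real.sqrt n * (au - al)))) ^ 2
              / (T * (1 / (2 * (n : ℝ)))) := by gcongr
          _ = T / (2 * (au - al) ^ 2) * ((At * D).mulVec d i) ^ 2 := by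
              rw [mul_pow, div_pow, mul_pow, mul_pow, hsn]
              field_simp
    _ = T / (2 * (au - al) ^ 2) * ∑ i, ((At * D).mulVec d i) ^ 2 := by rw [Finset.mul_sum]
    _ ≤ T / (2 * (au - al) ^ 2) * (4 * c ^ 2) := by gcongr
    _ = _ := by
      field_simp
      ring

/-- **Statement 14 (minimax lower bound, Theorem 1).**  Write `p = q + 1` (so the first
column of `D` is singled out).  Under the physical constraints and the RIP-type upper bound
on `ÃD`, the minimax risk over the class
`F_{p,s,D} = {f ⪰ 0 : ‖f‖₁ = 1, ‖D̄ᵀf‖₀ ≤ s}`, with observations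
`y ~ Poisson(T·Af*)` (a product of Poisson measures on `ℕⁿ`), is bounded below by
`max_{1 ≤ k ≤ s} min( k/(32 p² λ_k²), (au−aℓ)²k/(512T)·ln((p−k−1)/(k/2)) )`
(stated equivalently: each term of the max is a lower bound). -/
theorem minimax_lower_bound
    (q s n : ℕ) (hp10 : 10 ≤ q + 1) (hs : 1 ≤ s) (hps : 3 * (s + 1) < q + 1) (hn : 1 ≤ n)
    (al au : ℝ) (hau : al < au)
    (δ : ℝ) (hδ0 : 0 ≤ δ) (hδ1 : δ < 1)
    (T : ℝ) (hT : 0 < T)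
    (D : Matrix (Fin (q + 1)) (Fin (q + 1)) ℝ) (hD : D.transpose * D = 1)
    (hD1 : ∀ j, D j 0 = 1 / Real.sqrt (q + 1))
    (Dbar : Matrix (Fin (q + 1)) (Fin q) ℝ)
    (hDbar : Dbar = Matrix.of fun i (j : Fin q) => D i j.succ)
    (hlam : ∀ k, 1 ≤ k → k ≤ s → 0 < sparseLoc Dbar k)
    (At : Matrix (Fin n) (Fin (q + 1)) ℝ)
    (hAt : ∀ i j, At i j ∈ Set.Icc (al / Real.sqrt n) (au / Real.sqrt n))
    (hRIP : ∀ u : Fin (q + 1) → ℝ,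
      (Finset.univ.filter fun i => u i ≠ 0).card ≤ 2 * s →
      ∑ i, ((At * D).mulVec u i) ^ 2 ≤ (1 + δ) * ∑ i, (u i) ^ 2)
    (A : Matrix (Fin n) (Fin (q + 1)) ℝ)
    (hA : A = Matrix.of fun i j =>
      (At i j + (au - 2 * al) / Real.sqrt n) / (2 * Real.sqrt n * (au - al))) :
    ∀ k, 1 ≤ k → k ≤ s →
      ENNReal.ofReal (min
          ((k : ℝ) / (32 * ((q : ℝ) + 1) ^ 2 * (sparseLoc Dbar k) ^ 2))
          ((au - al) ^ 2 * k / (512 * T) *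
            Real.log ((((q : ℝ) + 1) - k - 1) / ((k : ℝ) / 2))))
        ≤ ⨅ fhat : (Fin n → ℕ) → Fin (q + 1) → ℝ,
            ⨆ fstar ∈ {f : Fin (q + 1) → ℝ | (∀ i, 0 ≤ f i) ∧ ∑ i, |f i| = 1 ∧
                (Finset.univ.filter fun i => Dbar.transpose.mulVec f i ≠ 0).card ≤ s},
              ∫⁻ y, ENNReal.ofReal (∑ j, (fhat y j - fstar j) ^ 2)
                ∂(Measure.pi fun i : Fin n =>
                    ProbabilityTheory.poissonMeasure (T * A.mulVec fstar i).toNNReal) := by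
  intro k hk1 hks
  refine le_iInf fun fhat => ?_
  subst hDbar
  set Db : Matrix (Fin (q + 1)) (Fin q) ℝ := Matrix.of fun i (j : Fin q) => D i j.succ with hDb
  set lam := sparseLoc Db k with hlamdef
  have hl : 0 < lam := hlam k hk1 hks
  obtain ⟨hL0, hLm⟩ := log_rate_bounds (q := q) hk1 (by omega)
  set L := Real.log ((((q : ℝ) + 1) - k - 1) / ((k : ℝ) / 2)) with hL
  have hd : 0 < au - al := sub_pos.2 hau
  have hk0 : (0 : ℝ) < k := by exact_mod_cast hk1
  have hm3 : 3 ≤ q / k := (Nat.le_div_iff_mul_le hk1).2 (by omega)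
  have hkm : k * (q / k) ≤ q := Nat.mul_div_le q k
  set m := q / k with hm
  have hm0 : (0 : ℝ) < m := by exact_mod_cast (by omega : 0 < m)
  set e : Fin k × Fin m → Fin q := fun z => Fin.castLE hkm (finProdFinEquiv z) with he_def
  have he : Function.Injective e :=
    (Fin.castLE_injective hkm).comp finProdFinEquiv.injective
  set t := min (1 / (((q : ℝ) + 1) ^ 2 * lam ^ 2)) ((au - al) ^ 2 * L / (16 * T)) with ht
  have ht0 : 0 ≤ t := le_min (by positivity) (by positivity)
  set c := Real.sqrt t with hc
  have hc0 : 0 ≤ c := Real.sqrt_nonneg t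
  have hc2 : c ^ 2 = t := Real.sq_sqrt ht0
  have hcl : c * lam ≤ 1 / ((q : ℝ) + 1) := by
    refine le_of_sq_le_sq ?_ (by positivity)
    calc (c * lam) ^ 2 = t * lam ^ 2 := by rw [mul_pow, hc2]
      _ ≤ 1 / (((q : ℝ) + 1) ^ 2 * lam ^ 2) * lam ^ 2 := by
        gcongr
        exact min_le_left _ _
      _ = (1 / ((q : ℝ) + 1)) ^ 2 := by field_simp
  have hf0 := signal_nonneg hD1 he hc0 hcl
  have hf1 := sum_signal (e := e) hD hD1 c
  have hlow := fun x => sensing_lower hn hau hAt hA (hf0 x) (hf1 x)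
  have hn0 : (0 : ℝ) < n := by exact_mod_cast hn
  have hrate : ∀ x i, 0 < T * A.mulVec (signal D e c x) i := fun x i =>
    mul_pos hT (lt_of_lt_of_le (by positivity) (hlow x i))
  have hexp : 2 * c ^ 2 * T / (au - al) ^ 2 ≤ L / 8 := by
    rw [hc2, div_le_iff₀ (by positivity)]
    have h1 : t * (16 * T) ≤ (au - al) ^ 2 * L := by
      rw [← le_div_iff₀ (by positivity)]
      exact min_le_right _ _
    linarith
  have hmain := product_risk (Y := Fin n → ℕ) (k := k) (m := m) (by omega)
    (fun x => poissonWeight fun i => T * A.mulVec (signal D e c x) i)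
    (fun x y => poissonWeight_pos (hrate x) y) (fun x => tsum_poissonWeight (hrate x))
    (Real.exp (L / 8)) (Real.exp_pos _).le
    (fun x b a => by
      rw [tsum_poissonWeight_sq_div (hrate _) (hrate _)]
      exact ENNReal.ofReal_le_ofReal (Real.exp_le_exp.2
        ((chi_exponent_le hn hs hau hδ1 hT hD hD1 hRIP hA x b a (hlow x)).trans hexp)))
    c (fun y b a => D.transpose.mulVec (fhat y) (e (b, a)).succ) _
    (fun x => by
      refine le_trans ?_ (le_iSup₂ (f := fun (fstar : Fin (q + 1) → ℝ) (_ : fstar ∈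
          {f : Fin (q + 1) → ℝ | (∀ i, 0 ≤ f i) ∧ ∑ i, |f i| = 1 ∧
                (Finset.univ.filter fun i => Db.transpose.mulVec f i ≠ 0).card ≤ s}) =>
              ∫⁻ y, ENNReal.ofReal (∑ j, (fhat y j - fstar j) ^ 2)
                ∂(Measure.pi fun i : Fin n =>
                    ProbabilityTheory.poissonMeasure (T * A.mulVec fstar i).toNNReal))
          (signal D e c x) ⟨hf0 x, ?_, (card_transpose_signal hD he c x).trans hks⟩)
      · rw [lintegral_pi_poisson (hrate x)]
        refine ENNReal.tsum_le_tsum fun y => ENNReal.ofReal_le_ofReal ?_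
        exact mul_le_mul_of_nonneg_left (block_loss_le hD he c x (fhat y))
          (poissonWeight_pos (hrate x) y).le
      · rw [← hf1 x]
        exact Finset.sum_congr rfl fun i _ => abs_of_nonneg (hf0 x i))
  refine le_trans (ENNReal.ofReal_le_ofReal ?_) hmain
  have hE : 1 / 32 ≤ 1 - Real.exp (L / 8) / m := by
    have : Real.exp (L / 8) / m ≤ 1 / 2 := by
      rw [div_le_iff₀ hm0]
      linarith
    linarith
  calc _ = k / 32 * t := by
        rw [ht, mul_min_of_nonneg _ _ (by positivity)]
        congr 1
        · field_simp
        · field_simp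
          norm_num
    _ = k * (t * (1 / 32)) := by ring
    _ ≤ k * (c ^ 2 * (1 - Real.exp (L / 8) / m)) := by
        rw [hc2]
        gcongr
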